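/- arXiv:2303.10467 — 2 statements merged into one kernel-verified Lean document; each statement's English description precedes it below -/
import Mathlib

section
/- Suppose λ_0, …, λ_{ns−1} are pairwise distinct and satisfy the local constraints. Fix a ∈ {0,…,n/s−1}, b ∈ {0,…,s−1}, and a helper set H ⊆ {0,…,n−1} \ {as+b} with |H| = d. If two codewords C = (C_0,…,C_{n−1}) and C′ = (C′_0,…,C′_{n−1}) of the array code satisfy C_j(i) = C′_j(i) for every j ∈ H and every i ∈ {0,…,ℓ−1} whose a-th base-s digit i_a equals b, then C_{as+b} = C′_{as+b}. In other words, node as+b can be repaired from any d helper nodes by accessing only the ℓ/s symbols with i_a = b from each helper, achieving the optimal repair bandwidth dℓ/(d−k+1) with the optimal-access property. -/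
open Matrix

/-- The `u`-th digit of `i` in base `s`. -/
def digit (s i u : ℕ) : ℕ := i / s ^ u % s

open scoped Classical in
/-- The `z`-th entry of the `(i,j)` block (a length-`t` column vector, `0 ≤ z < t`) of the
block matrix `A_{a,b}^{(t)}`; the group size is `g` (`g = s` for the first construction and
`g = s + 1` for the second), so the relevant `λ`-index is `a·s·g + b·s + j_a`. -/
noncomputable def Aent {F : Type*} [Field F] (lam : ℕ → F) (s g a b i j z : ℕ) : F :=
  if i = j then lam (a * s * g + b * s + digit s j a) ^ z
  else if digit s i a = b ∧ digit s j a ≠ b ∧ (∀ u, u ≠ a → digit s i u = digit s j u) then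
    -(lam (a * s * g + b * s + digit s j a) ^ z)
  else 0

/-- `A_{a,b}^{(t)}` as an `ℓt × ℓ` matrix; row `ρ` encodes block row `ρ / t` and
inner row `ρ % t`. -/
noncomputable def Amat {F : Type*} [Field F] (lam : ℕ → F) (s g ℓ a b t : ℕ) :
    Matrix (Fin (ℓ * t)) (Fin ℓ) F :=
  Matrix.of fun ρ j => Aent lam s g a b ((ρ : ℕ) / t) (j : ℕ) ((ρ : ℕ) % t)

/-- The `m`-th smallest element of the finite set `B ⊆ ℕ` (junk value `0` if `m ≥ |B|`). -/
def enum (B : Finset ℕ) (m : ℕ) : ℕ := (B.sort (· ≤ ·)).getD m 0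

/-- `A_{a,B}^{(t)} = [A_{a,b₁}^{(t)} | ⋯ | A_{a,b_v}^{(t)}]` as an `ℓt × ℓ|B|` matrix:
row `ρ` encodes block row `ρ / t` and inner row `ρ % t`; column `κ` selects the
`κ / ℓ`-th member of `B` and inner column `κ % ℓ`. -/
noncomputable def AmatB {F : Type*} [Field F] (lam : ℕ → F) (s g ℓ a t : ℕ) (B : Finset ℕ) :
    Matrix (Fin (ℓ * t)) (Fin (ℓ * B.card)) F :=
  Matrix.of fun ρ κ =>
    Aent lam s g a (enum B ((κ : ℕ) / ℓ)) ((ρ : ℕ) / t) ((κ : ℕ) % ℓ) ((ρ : ℕ) % t)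

/-- The local (in-group) constraints: every square matrix `A_{a,B}` (for a group index
`a < groups` and a nonempty `B ⊆ {0, …, g-1}`) is invertible. -/
def LocalConstraints {F : Type*} [Field F] (lam : ℕ → F) (s g ℓ groups : ℕ) : Prop :=
  ∀ a < groups, ∀ B ⊆ Finset.range g, B.Nonempty → (AmatB lam s g ℓ a B.card B).det ≠ 0

/-- Membership in the array code: `(C_0, …, C_{n−1})` satisfies the parity check equations
`Σ_{a,b} A_{a,b}^{(r)} · C_{a·g+b} = 0` (node `m = a·g + b`). -/
def InCode {F : Type*} [Field F] (lam : ℕ → F) (s g ℓ r n : ℕ) (C : ℕ → ℕ → F) : Prop :=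
  ∀ ρ < ℓ * r, ∑ m ∈ Finset.range n, ∑ j ∈ Finset.range ℓ,
    Aent lam s g (m / g) (m % g) (ρ / r) j (ρ % r) * C m j = 0

/-!
Let `D` be the difference of the two codewords and restrict the parity checks to the rows `i` with
`i_a = b`. In the exponent `z` of the `λ`'s they say that `∑ a', x a' z = 0` for `z < r`, where the
group `a'` contributes the sequence `x a'`. By the local constraints, `x a'` for `a' ≠ a` satisfies
a monic linear recurrence with matrix coefficients acting on the digit `a'` only, of order the
number of non-helpers in the group. In the group `a` only the row `b` of the kernel matrices is
left, so `x a` satisfies a scalar recurrence of order `s - 1` more than the number of non-helpers.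
Coefficients acting on different digits commute, hence the product of the characteristic
polynomials annihilates `∑ a', x a'`. Its degree is at most `n - d + s - 1 = r`, so the parity
checks hold for *all* `z`. Each entry of `∑ a', x a'` is a combination of `z`-th powers of pairwise
distinct `λ`'s, and by Vandermonde every coefficient vanishes; those coming from the node `(a, b)`
are up to sign the entries of `D` there.
-/

section Recurrence

open Polynomial

variable {R M γ : Type*} [Ring R] [AddCommGroup M] [Module R M]

/-- The shift operator on sequences. -/
def seqShift (M : Type*) [AddCommGroup M] : Module.End ℤ (ℕ → M) :=
  LinearMap.funLeft ℤ M Nat.succ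

/-- The action of polynomials on sequences in which `X` acts as the shift, so that
`seqAction R M p x = 0` says that `x` satisfies the linear recurrence with characteristic
polynomial `p`. As `R` need not be commutative, the operators on sequences are only additive. -/
noncomputable def seqAction (R M : Type*) [Ring R] [AddCommGroup M] [Module R M] :
    R[X] →+* Module.End ℤ (ℕ → M) :=
  eval₂RingHom' (Module.toModuleEnd ℤ (ℕ → M)) (seqShift M) fun _ => rfl

theorem seqShift_pow_apply (n : ℕ) (x : ℕ → M) (z : ℕ) : (seqShift M ^ n) x z = x (z + n) := by
  induction n generalizing x with
  | zero => rfl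
  | succ n ih =>
    rw [pow_succ, Module.End.mul_apply, ih]
    rfl

theorem seqAction_C_apply (c : R) (x : ℕ → M) (z : ℕ) : seqAction R M (C c) x z = c • x z := by
  change eval₂ (Module.toModuleEnd ℤ (ℕ → M)) (seqShift M) (C c) x z = _
  rw [eval₂_C]
  rfl

theorem seqAction_apply (p : R[X]) (x : ℕ → M) (z : ℕ) :
    seqAction R M p x z = ∑ i ∈ Finset.range (p.natDegree + 1), p.coeff i • x (z + i) := by
  change eval₂ (Module.toModuleEnd ℤ (ℕ → M)) (seqShift M) p x z = _
  simp [eval₂_eq_sum_range, LinearMap.sum_apply, seqShift_pow_apply]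

theorem seqAction_apply_eq_zero_of_forall_lt {p : R[X]} {m n : ℕ} (hp : p.natDegree ≤ m)
    {x : ℕ → M} (hx : ∀ z < m + n, x z = 0) {z : ℕ} (hz : z < n) : seqAction R M p x z = 0 := by
  rw [seqAction_apply]
  refine Finset.sum_eq_zero fun i hi => ?_
  rw [hx _ (by grind), smul_zero]

theorem eq_zero_of_seqAction_eq_zero {p : R[X]} (hp : p.Monic) {x : ℕ → M}
    (hx : seqAction R M p x = 0) (h₀ : ∀ z < p.natDegree, x z = 0) : x = 0 := by
  funext z
  induction z using Nat.strong_induction_on with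
  | _ z ih =>
    obtain hz | hz := lt_or_ge z p.natDegree
    · exact h₀ z hz
    · have h := congrFun hx (z - p.natDegree)
      rw [seqAction_apply, Finset.sum_range_succ, Finset.sum_eq_zero fun i hi => by
        rw [ih _ (by grind), Pi.zero_apply, smul_zero]] at h
      simpa [hp.coeff_natDegree, Nat.sub_add_cancel hz] using h

theorem sum_eq_zero_of_seqAction_eq_zero {G : Finset γ} {p : γ → R[X]} {v : γ → ℕ}
    (hp : ∀ g ∈ G, (p g).Monic) (hv : ∀ g ∈ G, (p g).natDegree ≤ v g)
    (hcomm : (G : Set γ).Pairwise fun g h => Commute (p g) (p h)) {x : γ → ℕ → M}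
    (hx : ∀ g ∈ G, seqAction R M (p g) (x g) = 0)
    (h₀ : ∀ z < ∑ g ∈ G, v g, ∑ g ∈ G, x g z = 0) : ∑ g ∈ G, x g = 0 := by
  classical
  induction G using Finset.induction_on generalizing x with
  | empty => rfl
  | insert g G hg ih =>
    rw [Finset.forall_mem_insert] at hp hv hx
    have hcommG : ∀ h ∈ G, Commute (p g) (p h) := fun h hh =>
      hcomm (Finset.mem_insert_self g G) (Finset.mem_insert_of_mem hh)
        (ne_of_mem_of_not_mem hh hg).symm
    have hsum : seqAction R M (p g) (∑ h ∈ insert g G, x h) =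
        ∑ h ∈ G, seqAction R M (p g) (x h) := by
      rw [map_sum, Finset.sum_insert hg, hx.1, zero_add]
    have hvanish : ∀ z < v g + ∑ h ∈ G, v h, (∑ h ∈ insert g G, x h) z = 0 := fun z hz => by
      rw [Finset.sum_apply]
      exact h₀ z (by rwa [Finset.sum_insert hg])
    refine eq_zero_of_seqAction_eq_zero hp.1 ?_ fun z hz => hvanish z (by omega)
    rw [hsum]
    refine ih hp.2 hv.2 (hcomm.mono (Finset.subset_insert g G)) (fun h hh => ?_) fun z hz => ?_
    · rw [← Module.End.mul_apply, ← map_mul, ← (hcommG h hh).eq, map_mul,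
        Module.End.mul_apply, hx.2 h hh, map_zero]
    · rw [← Finset.sum_apply, ← hsum]
      exact seqAction_apply_eq_zero_of_forall_lt hv.1 hvanish hz

theorem seqAction_mul_pow_smul (p : R[X]) (t l : R) (y : M) (z : ℕ) :
    seqAction R M p (fun z => (t * l ^ z) • y) z = ((p * C t).eval l * l ^ z) • y := by
  have hC : (fun z => (t * l ^ z) • y) = seqAction R M (C t) fun z => l ^ z • y :=
    funext fun z => by rw [seqAction_C_apply, mul_smul]
  rw [hC, ← Module.End.mul_apply, ← map_mul, seqAction_apply, eval_eq_sum_range,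
    Finset.sum_mul, Finset.sum_smul]
  exact Finset.sum_congr rfl fun i _ => by rw [smul_smul, mul_assoc, ← pow_add, add_comm i]

theorem seqAction_map_pow_smul {K : Type*} [CommRing K] [Algebra K R] [Module K M]
    [IsScalarTower K R M] (p : K[X]) (μ : K) (y : M) (z : ℕ) :
    seqAction R M (p.map (algebraMap K R)) (fun z => μ ^ z • y) z =
      (p.eval μ * μ ^ z) • y := by
  have h := seqAction_mul_pow_smul (p.map (algebraMap K R)) 1 (algebraMap K R μ) y z
  simpa only [one_mul, map_one, mul_one, eval_map_apply, ← map_pow, ← map_mul,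
    algebraMap_smul] using h

theorem commute_of_forall_commute_coeff {p q : R[X]}
    (h : ∀ i j, Commute (p.coeff i) (q.coeff j)) : Commute p q := by
  ext n
  rw [coeff_mul, coeff_mul, ← Finset.Nat.sum_antidiagonal_swap]
  exact Finset.sum_congr rfl fun ij _ => (h _ _).eq

theorem exists_vecMul_eq_and_commute {m : Type*} [Fintype m] [DecidableEq m]
    {V : Matrix m m R} (hV : IsUnit V) (t : m → R) :
    ∃ w : m → R, w ᵥ* V = t ∧
      ∀ c, (∀ i j, Commute c (V i j)) → (∀ j, Commute c (t j)) → ∀ i, Commute c (w i) := by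
  obtain ⟨W, hVW, hWV⟩ := isUnit_iff_exists.1 hV
  refine ⟨t ᵥ* W, by rw [Matrix.vecMul_vecMul, hWV, Matrix.vecMul_one], fun c hcV hct i => ?_⟩
  have hcW : Commute (Matrix.diagonal fun _ => c) W := by
    have hcV' : Commute (Matrix.diagonal fun _ => c) V :=
      Matrix.ext fun i j => by simpa using (hcV i j).eq
    exact Commute.units_inv_right (u := ⟨V, W, hVW, hWV⟩) hcV'
  refine Commute.sum_right _ _ _ fun j _ => (hct j).mul_right ?_
  simpa [Commute, SemiconjBy] using congrFun (congrFun hcW.eq j) i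

theorem exists_monic_eval_mul_C_eq_zero {v : ℕ} {t l : Fin v → R}
    (hV : IsUnit (Matrix.of fun z q : Fin v => t q * l q ^ (z : ℕ))) :
    ∃ p : R[X], p.Monic ∧ p.natDegree ≤ v ∧ (∀ q, (p * C (t q)).eval (l q) = 0) ∧
      ∀ c, (∀ q, Commute c (t q)) → (∀ q, Commute c (l q)) → ∀ i, Commute c (p.coeff i) := by
  obtain ⟨w, hw, hcomm⟩ := exists_vecMul_eq_and_commute hV fun q => -(t q * l q ^ v)
  have hdeg := degree_sum_fin_lt w
  refine ⟨X ^ v + ∑ i : Fin v, C (w i) * X ^ (i : ℕ), monic_X_pow_add hdeg, ?_, fun q => ?_,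
    fun c hct hcl i => ?_⟩
  · exact natDegree_le_of_degree_le
      ((degree_add_le _ _).trans (max_le (degree_X_pow_le v) hdeg.le))
  · have hq := congrFun hw q
    simp only [Matrix.vecMul, dotProduct, Matrix.of_apply] at hq
    simp only [add_mul, Finset.sum_mul, mul_assoc, X_pow_mul_C, eval_add, eval_finsetSum,
      eval_C_mul, eval_X_pow]
    rw [hq, add_neg_cancel]
  · have hcw := hcomm c (fun i j => (hct j).mul_right ((hcl j).pow_right i))
      fun q => ((hct q).mul_right ((hcl q).pow_right v)).neg_right
    simp only [coeff_add, coeff_X_pow, finsetSum_coeff, coeff_C_mul_X_pow]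
    refine .add_right ?_ (Commute.sum_right _ _ _ fun j _ => ?_)
    · split_ifs
      exacts [.one_right c, .zero_right c]
    · split_ifs
      exacts [hcw j, .zero_right c]

end Recurrence

theorem eq_zero_of_forall_sum_mul_pow_eq_zero {κ K : Type*} [Fintype κ] [CommRing K] [IsDomain K]
    {μ w : κ → K} (hμ : Function.Injective μ) (h : ∀ z : ℕ, ∑ k, w k * μ k ^ z = 0) : w = 0 := by
  let e := Fintype.equivFin κ
  have hw : w ∘ e.symm = 0 := Matrix.eq_zero_of_forall_pow_sum_mul_pow_eq_zero
    (hμ.comp e.symm.injective) fun z => (e.symm.sum_comp fun k => w k * μ k ^ (z : ℕ)).trans (h z)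
  exact funext fun k => by simpa using congrFun hw (e k)

theorem sum_range_mul_eq_sum_sum {M : Type*} [AddCommMonoid M] (N s : ℕ) (f : ℕ → M) :
    ∑ m ∈ Finset.range (N * s), f m = ∑ a : Fin N, ∑ b : Fin s, f (a * s + b) := by
  rw [Finset.sum_range, ← finProdFinEquiv.sum_comp, Fintype.sum_prod_type]
  exact Finset.sum_congr rfl fun a _ => Finset.sum_congr rfl fun b _ => congrArg f <| by
    rw [finProdFinEquiv_apply_val, add_comm, mul_comm]

theorem sum_card_filter_notMem {ι σ : Type*} [Fintype ι] [DecidableEq ι] [Fintype σ]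
    [DecidableEq σ] (H : Finset (ι × σ)) :
    ∑ a, Finset.card {b | (a, b) ∉ H} = Fintype.card ι * Fintype.card σ - H.card := by
  rw [← Fintype.card_prod, ← Finset.card_compl, Finset.compl_eq_univ_sdiff,
    ← Finset.filter_notMem_eq_sdiff]
  simp only [Finset.card_filter, Fintype.sum_prod_type]

section DigitOp

variable {ι σ K : Type*} [DecidableEq ι] [Fintype σ] [DecidableEq σ]

/-- The matrix `φ` acting on the digit `a` of the index of a vector, that is, `φ` on the `a`-th
factor of the tensor power of `σ → K` and the identity on the other factors. -/
noncomputable def digitOp [CommRing K] (a : ι) :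
    Matrix σ σ K →ₐ[K] Module.End K ((ι → σ) → K) :=
  AlgHom.ofLinearMap
    { toFun φ :=
        { toFun f i := ∑ c, φ (i a) c * f (Function.update i a c)
          map_add' f g := by ext i; simp [mul_add, Finset.sum_add_distrib]
          map_smul' k f := by ext i; simp [Finset.mul_sum, mul_left_comm] }
      map_add' φ ψ := by ext; simp [add_mul, Finset.sum_add_distrib]
      map_smul' k φ := by ext; simp [Finset.mul_sum, mul_assoc] }
    (by
      refine LinearMap.ext fun f => funext fun i => ?_
      simp [Matrix.one_apply])
    (by
      intro φ ψ
      refine LinearMap.ext fun f => funext fun i => ?_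
      simp only [LinearMap.coe_mk, AddHom.coe_mk, Module.End.mul_apply, Matrix.mul_apply,
        Function.update_self, Function.update_idem, Finset.sum_mul, Finset.mul_sum, mul_assoc]
      exact Finset.sum_comm)

theorem digitOp_apply [CommRing K] (a : ι) (φ : Matrix σ σ K) (f : (ι → σ) → K) (i : ι → σ) :
    digitOp a φ f i = ∑ c, φ (i a) c * f (Function.update i a c) :=
  rfl

theorem commute_digitOp_of_ne [CommRing K] {a c : ι} (hac : a ≠ c) (φ ψ : Matrix σ σ K) :
    Commute (digitOp a φ) (digitOp c ψ) := by
  refine LinearMap.ext fun f => funext fun i => ?_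
  simp only [Module.End.mul_apply, digitOp_apply, Finset.mul_sum, Function.update_of_ne hac,
    Function.update_of_ne hac.symm, Function.update_comm hac]
  rw [Finset.sum_comm]
  exact Finset.sum_congr rfl fun _ _ => Finset.sum_congr rfl fun _ _ => mul_left_comm _ _ _

theorem toMatrix'_digitOp_apply [CommRing K] [Fintype ι] (a : ι) (φ : Matrix σ σ K) (i j : ι → σ) :
    LinearMap.toMatrix' (digitOp a φ) i j = if ∀ u ≠ a, i u = j u then φ (i a) (j a) else 0 := by
  have hupd : ∀ c, Function.update i a c = j ↔ j a = c ∧ ∀ u ≠ a, i u = j u := fun c => by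
    rw [Function.update_eq_iff, eq_comm]
  simp [LinearMap.toMatrix'_apply, digitOp_apply, Pi.single_apply, hupd, ite_and]

theorem digitOp_single_apply [CommRing K] (a : ι) (b c : σ) (k : K) (f : (ι → σ) → K) (i : ι → σ) :
    digitOp a (Matrix.single b c k) f i = if i a = b then k * f (Function.update i a c) else 0 := by
  by_cases h : i a = b
  · simp [digitOp_apply, Matrix.single_apply, h]
  · simp [digitOp_apply, h, Ne.symm h]

theorem digitOp_single_eq_zero [CommRing K] {a : ι} {b : σ} {f : (ι → σ) → K}
    (hf : ∀ i, i a = b → f i = 0) (k : K) : digitOp a (Matrix.single b b k) f = 0 := by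
  funext i
  rw [digitOp_single_apply, Pi.zero_apply]
  split_ifs with h
  · rw [← h, Function.update_eq_self, hf i h, mul_zero]
  · rfl

end DigitOp

section GroupRecurrence

open Polynomial

variable {ι σ K : Type*} [DecidableEq ι] [Fintype σ] [DecidableEq σ] [CommRing K]

/-- The sequence `x` of vectors satisfies a monic linear recurrence of order at most `v` with
operator coefficients acting on the digit `a` only, in the sense that they commute with everything
that commutes with all operators on that digit. -/
def IsDigitRecurrent (a : ι) (v : ℕ) (x : ℕ → (ι → σ) → K) : Prop :=
  ∃ p : (Module.End K ((ι → σ) → K))[X], p.Monic ∧ p.natDegree ≤ v ∧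
    seqAction _ ((ι → σ) → K) p x = 0 ∧
    ∀ c, (∀ φ : Matrix σ σ K, Commute c (digitOp a φ)) → ∀ i, Commute c (p.coeff i)

theorem IsDigitRecurrent.mono {a : ι} {v w : ℕ} (hvw : v ≤ w) {x : ℕ → (ι → σ) → K}
    (hx : IsDigitRecurrent a v x) : IsDigitRecurrent a w x :=
  hx.imp fun _ ⟨hmonic, hdeg, h⟩ => ⟨hmonic, hdeg.trans hvw, h⟩

theorem sum_eq_zero_of_isDigitRecurrent [Fintype ι] {x : ι → ℕ → (ι → σ) → K} {v : ι → ℕ}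
    (hx : ∀ a, IsDigitRecurrent a (v a) (x a)) (h₀ : ∀ z < ∑ a, v a, ∑ a, x a z = 0) :
    ∑ a, x a = 0 := by
  choose p hmonic hdeg hann hcomm using hx
  refine sum_eq_zero_of_seqAction_eq_zero (fun a _ => hmonic a) (fun a _ => hdeg a)
    (fun a _ c _ hac => commute_of_forall_commute_coeff fun i j => ?_) (fun a _ => hann a) h₀
  exact hcomm c _ (fun φ => (hcomm a _ (fun ψ => commute_digitOp_of_ne hac.symm φ ψ) i).symm) j

theorem isDigitRecurrent_sum_pow_smul {κ : Type*} [Fintype κ] (a : ι) (S : Finset K)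
    {μ : κ → K} {y : κ → (ι → σ) → K} (h : ∀ k, μ k ∈ S ∨ y k = 0) :
    IsDigitRecurrent a S.card fun z => ∑ k, μ k ^ z • y k := by
  set p : K[X] := ∏ m ∈ S, (X - C m)
  have hp : p.Monic := monic_prod_X_sub_C _ S
  refine ⟨p.map (algebraMap K _), hp.map _, ?_, ?_, fun c _ i => ?_⟩
  · exact natDegree_map_le.trans (natDegree_prod_le _ _ |>.trans <| by
      simpa using Finset.sum_le_card_nsmul S _ 1 fun m _ => natDegree_X_sub_C_le m)
  · have hx : (fun z => ∑ k, μ k ^ z • y k) = ∑ k, fun z => μ k ^ z • y k := by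
      ext z : 1; rw [Finset.sum_apply]
    rw [hx, map_sum]
    refine Finset.sum_eq_zero fun k _ => funext fun z => ?_
    rw [seqAction_map_pow_smul]
    obtain hk | hk := h k
    · rw [eval_prod, Finset.prod_eq_zero hk (by simp), zero_mul, zero_smul, Pi.zero_apply]
    · rw [hk, smul_zero, Pi.zero_apply]
  · rw [coeff_map]
    exact Algebra.commute_algebraMap_right _ _

end GroupRecurrence

section CheckKernel

variable {ι σ K : Type*} [DecidableEq σ]

/-- The kernel matrix `K_{a,b}` with its `λ`-columns stripped off: the row `z` of the blocks of
`A_{a,b}` is `checkKernel K b * diagonal (μ a b) ^ z` acting on the digit `a`, where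
`μ a b c = λ_{as² + bs + c}`. -/
def checkKernel (K : Type*) [CommRing K] (b : σ) : Matrix σ σ K :=
  of fun x y => if x = y then 1 else if x = b then -1 else 0

theorem checkKernel_self_ne_zero [CommRing K] [Nontrivial K] (b c : σ) :
    checkKernel K b b c ≠ 0 := by
  by_cases h : b = c <;> simp [checkKernel, h]

variable [DecidableEq ι] [Fintype σ]

theorem single_mul_checkKernel_mul_diagonal_pow [CommRing K] (b b' : σ) (ν : σ → K) (z : ℕ) :
    Matrix.single b b 1 * (checkKernel K b' * diagonal ν ^ z) =
      ∑ c, ν c ^ z • Matrix.single b c (checkKernel K b' b c) := by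
  ext x y
  by_cases hx : b = x
  · subst hx
    simp [Matrix.sum_apply, Matrix.single_apply, diagonal_pow, mul_comm]
  · simp [Matrix.sum_apply, hx, Ne.symm hx]

theorem digitOp_mul_diagonal_pow_apply [CommRing K] (a : ι) (φ : Matrix σ σ K) (ν : σ → K) (z : ℕ)
    (f : (ι → σ) → K) (i : ι → σ) :
    digitOp a (φ * diagonal ν ^ z) f i =
      ∑ c, φ (i a) c * f (Function.update i a c) * ν c ^ z := by
  rw [digitOp_apply]
  simp [diagonal_pow, mul_right_comm]

/-- The matrix `A_{a,B}` for `|B| = v`, with `B` listed as `e 0, e 1, …`, as a `v × v` matrix of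
operators. -/
noncomputable def checkBlock [CommRing K] (μ : σ → σ → K) (a : ι) {v : ℕ} (e : Fin v → σ) :
    Matrix (Fin v) (Fin v) (Module.End K ((ι → σ) → K)) :=
  of fun z q => digitOp a (checkKernel K (e q) * diagonal (μ (e q)) ^ (z : ℕ))

theorem isDigitRecurrent_sum_of_isUnit_checkBlock [CommRing K] {μ : σ → σ → K} {a : ι} {v : ℕ}
    {e : Fin v → σ} (he : IsUnit (checkBlock μ a e)) {y : σ → (ι → σ) → K}
    (hy : ∀ b ∉ Set.range e, y b = 0) :
    IsDigitRecurrent a v fun z =>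
      ∑ b, digitOp a (checkKernel K b * diagonal (μ b) ^ z) (y b) := by
  have hblock : checkBlock μ a e = of fun z q : Fin v =>
      digitOp a (checkKernel K (e q)) * digitOp a (diagonal (μ (e q))) ^ (z : ℕ) := by
    simp only [checkBlock, map_mul, map_pow]
  obtain ⟨p, hmonic, hdeg, hann, hcomm⟩ := exists_monic_eval_mul_C_eq_zero (hblock ▸ he)
  refine ⟨p, hmonic, hdeg, ?_, fun c hc => hcomm c (fun _ => hc _) fun _ => hc _⟩
  have hsum : (fun z => ∑ b, digitOp a (checkKernel K b * diagonal (μ b) ^ z) (y b)) =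
      ∑ b, fun z => (digitOp a (checkKernel K b) * digitOp a (diagonal (μ b)) ^ z) • y b := by
    ext z : 1
    simp only [map_mul, map_pow, Finset.sum_apply, Module.End.smul_def]
  rw [hsum, map_sum]
  refine Finset.sum_eq_zero fun b _ => funext fun z => ?_
  rw [seqAction_mul_pow_smul, Pi.zero_apply]
  by_cases hb : b ∈ Set.range e
  · obtain ⟨q, rfl⟩ := hb
    rw [hann, zero_mul, zero_smul]
  · rw [hy b hb, smul_zero]

end CheckKernel

section Repair

variable {ι σ K : Type*} [DecidableEq ι] [Fintype σ] [DecidableEq σ]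

theorem isDigitRecurrent_digitOp_single_sum [CommRing K] {ν : σ → σ → K} {a : ι} {b : σ}
    {B : Finset σ} (hb : b ∈ B) {y : σ → (ι → σ) → K} (hy : ∀ b' ∉ B, ∀ i, i a = b → y b' i = 0) :
    IsDigitRecurrent a (B.card + (Fintype.card σ - 1)) fun z =>
      digitOp a (Matrix.single b b 1)
        (∑ b', digitOp a (checkKernel K b' * diagonal (ν b') ^ z) (y b')) := by
  classical
  -- For `b' ≠ b` the row `b` of `checkKernel K b'` is zero outside the column `b`.
  set S : Finset K := Finset.univ.image (ν b) ∪ (B.erase b).image fun b' => ν b' b with hS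
  have hcard : S.card ≤ B.card + (Fintype.card σ - 1) := by
    have hunion : S.card ≤ _ := Finset.card_union_le _ _
    have hrow : (Finset.univ.image (ν b)).card ≤ Fintype.card σ := Finset.card_image_le
    have hcol := (Finset.card_image_le (s := B.erase b) (f := fun b' => ν b' b)).trans_eq
      (Finset.card_erase_of_mem hb)
    have hpos := Finset.card_pos.2 ⟨b, hb⟩
    omega
  let w (t : σ × σ) := digitOp a (Matrix.single b t.2 (checkKernel K t.1 b t.2)) (y t.1)
  have hw : ∀ t : σ × σ, ν t.1 t.2 ∈ S ∨ w t = 0 := by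
    rintro ⟨b', c⟩
    obtain rfl | hb' := eq_or_ne b' b
    · exact .inl (by simp [hS])
    obtain rfl | hc := eq_or_ne c b
    · by_cases hB : b' ∈ B
      · exact .inl (Finset.mem_union_right _ (Finset.mem_image_of_mem _ (by simp [hb', hB])))
      · exact .inr (digitOp_single_eq_zero (hy b' hB) _)
    · exact .inr (by simp [w, checkKernel, hc.symm, hb'.symm])
  convert (isDigitRecurrent_sum_pow_smul a S hw).mono hcard using 2 with z
  simp only [map_sum, ← Module.End.mul_apply, ← map_mul,
    single_mul_checkKernel_mul_diagonal_pow, Fintype.sum_prod_type, w]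
  simp only [map_smul, LinearMap.sum_apply, LinearMap.smul_apply]

theorem isDigitRecurrent_digitOp_single_sum_of_ne [CommRing K] {ν : σ → σ → K} {a a' : ι}
    (ha : a ≠ a') {b : σ} {B : Finset σ} {e : Fin B.card ≃ B}
    (he : IsUnit (checkBlock ν a' fun q => ↑(e q))) {y : σ → (ι → σ) → K}
    (hy : ∀ b' ∉ B, ∀ i, i a = b → y b' i = 0) :
    IsDigitRecurrent a' B.card fun z =>
      digitOp a (Matrix.single b b 1)
        (∑ b', digitOp a' (checkKernel K b' * diagonal (ν b') ^ z) (y b')) := by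
  have hy' : ∀ b' ∉ Set.range fun q => (e q : σ), digitOp a (Matrix.single b b 1) (y b') = 0 :=
    fun b' hb' => digitOp_single_eq_zero (hy b' fun hB => hb' ⟨e.symm ⟨b', hB⟩, by simp⟩) 1
  convert isDigitRecurrent_sum_of_isUnit_checkBlock he hy' using 2 with z
  simp only [map_sum, ← Module.End.mul_apply, (commute_digitOp_of_ne ha _ _).eq]

variable [Fintype ι] [CommRing K] [IsDomain K] {μ : ι → σ → σ → K} {a : ι} {b : σ}

theorem eq_zero_of_forall_parity_eq_zero
    (hμ : Function.Injective fun t : ι × σ × σ => μ t.1 t.2.1 t.2.2) {D : ι → σ → (ι → σ) → K}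
    (hD : ∀ z : ℕ, ∀ i, i a = b →
      (∑ a', ∑ b', digitOp a' (checkKernel K b' * diagonal (μ a' b') ^ z) (D a' b')) i = 0) :
    D a b = 0 := by
  have hcoeff : ∀ i, i a = b → ∀ c,
      checkKernel K b (i a) c * D a b (Function.update i a c) = 0 := fun i hi c => by
    refine congrFun (eq_zero_of_forall_sum_mul_pow_eq_zero hμ (w := fun t : ι × σ × σ =>
      checkKernel K t.2.1 (i t.1) t.2.2 * D t.1 t.2.1 (Function.update i t.1 t.2.2)) fun z => ?_)
      (a, b, c)
    simpa only [Fintype.sum_prod_type, Finset.sum_apply, digitOp_mul_diagonal_pow_apply]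
      using hD z i hi
  funext i
  have h := hcoeff (Function.update i a b) (Function.update_self ..) (i a)
  rw [Function.update_self, Function.update_idem, Function.update_eq_self] at h
  exact (mul_eq_zero.1 h).resolve_left (checkKernel_self_ne_zero b (i a))

theorem eq_zero_of_parity_eq_zero_of_helpers
    (hμ : Function.Injective fun t : ι × σ × σ => μ t.1 t.2.1 t.2.2)
    (hunit : ∀ a (B : Finset σ), ∃ e : Fin B.card ≃ B, IsUnit (checkBlock (μ a) a fun q => ↑(e q)))
    {H : Finset (ι × σ)} (hab : (a, b) ∉ H) {r : ℕ}
    (hH : Fintype.card ι * Fintype.card σ + Fintype.card σ ≤ H.card + r + 1)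
    {D : ι → σ → (ι → σ) → K}
    (hD : ∀ z < r,
      ∑ a', ∑ b', digitOp a' (checkKernel K b' * diagonal (μ a' b') ^ z) (D a' b') = 0)
    (hDH : ∀ t ∈ H, ∀ i, i a = b → D t.1 t.2 i = 0) : D a b = 0 := by
  let x (a' : ι) (z : ℕ) : (ι → σ) → K := digitOp a (Matrix.single b b 1)
    (∑ b', digitOp a' (checkKernel K b' * diagonal (μ a' b') ^ z) (D a' b'))
  let B (a' : ι) : Finset σ := {b' | (a', b') ∉ H}
  let v (a' : ι) : ℕ := (B a').card + if a' = a then Fintype.card σ - 1 else 0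
  have hDB : ∀ a', ∀ b' ∉ B a', ∀ i, i a = b → D a' b' i = 0 := fun a' b' hb' =>
    hDH (a', b') (by simpa [B] using hb')
  have hx : ∀ a', IsDigitRecurrent a' (v a') (x a') := fun a' => by
    by_cases ha' : a' = a
    · subst ha'
      simpa only [v, if_true] using
        isDigitRecurrent_digitOp_single_sum (by simpa [B] using hab) (hDB a')
    · obtain ⟨e, he⟩ := hunit a' (B a')
      simpa only [v, if_neg ha', add_zero] using
        isDigitRecurrent_digitOp_single_sum_of_ne (Ne.symm ha') he (hDB a')
  have hv : ∑ a', v a' ≤ r := by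
    have hσ := Fintype.card_pos_iff.2 ⟨b⟩
    have hHle := (Finset.card_le_univ H).trans_eq (Fintype.card_prod ι σ)
    simp only [v, B, Finset.sum_add_distrib, sum_card_filter_notMem, Fintype.sum_ite_eq']
    omega
  have hsum : ∑ a', x a' = 0 := sum_eq_zero_of_isDigitRecurrent hx fun z hz => by
    rw [← map_sum, hD z (hz.trans_le hv), map_zero]
  refine eq_zero_of_forall_parity_eq_zero hμ fun z i hi => ?_
  have h := congrFun (congrFun hsum z) i
  rw [Finset.sum_apply, ← map_sum, digitOp_single_apply, if_pos hi, one_mul, ← hi,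
    Function.update_eq_self] at h
  exact h

end Repair

section Encoding

variable {F : Type*} {N s : ℕ}

theorem digit_finFunctionFinEquiv (i : Fin N → Fin s) (u : Fin N) :
    digit s (finFunctionFinEquiv i) u = i u := by
  have h := congrFun (finFunctionFinEquiv.symm_apply_apply i) u
  rw [← h]
  rfl

theorem digit_eq_zero_of_lt_pow {i u : ℕ} (hs : 0 < s) (hi : i < s ^ N) (hu : N ≤ u) :
    digit s i u = 0 := by
  rw [digit, Nat.div_eq_of_lt (hi.trans_le (Nat.pow_le_pow_right hs hu)), Nat.zero_mod]

theorem forall_digit_finFunctionFinEquiv_eq_iff (a : Fin N) (i j : Fin N → Fin s) :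
    (∀ u, u ≠ (a : ℕ) → digit s (finFunctionFinEquiv i) u = digit s (finFunctionFinEquiv j) u) ↔
      ∀ u ≠ a, i u = j u := by
  refine ⟨fun h u hu => Fin.ext ?_, fun h u hu => ?_⟩
  · simpa only [digit_finFunctionFinEquiv] using h u (Fin.val_ne_of_ne hu)
  · obtain huN | huN := lt_or_ge u N
    · lift u to Fin N using huN
      rw [digit_finFunctionFinEquiv, digit_finFunctionFinEquiv, h u (Fin.ne_of_val_ne hu)]
    · have hs : 0 < s := (i a).pos
      rw [digit_eq_zero_of_lt_pow hs (Fin.is_lt _) huN,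
        digit_eq_zero_of_lt_pow hs (Fin.is_lt _) huN]

/-- The evaluation points `λ_{as² + bs + c}` grouped by the node `(a, b)`. -/
def nodePoints (lam : ℕ → F) (s : ℕ) (a : Fin N) (b c : Fin s) : F :=
  lam (a * s * s + b * s + c)

theorem nodePoints_injective {lam : ℕ → F}
    (hlam : ∀ i < N * s * s, ∀ j < N * s * s, lam i = lam j → i = j) :
    Function.Injective fun t : Fin N × Fin s × Fin s => nodePoints lam s t.1 t.2.1 t.2.2 := by
  let e : Fin N × Fin s × Fin s ≃ Fin (N * s * s) :=
    (Equiv.prodAssoc ..).symm.trans ((finProdFinEquiv.prodCongr (.refl _)).trans finProdFinEquiv)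
  have he : ∀ t : Fin N × Fin s × Fin s,
      nodePoints lam s t.1 t.2.1 t.2.2 = lam (e t) := fun t => congrArg lam <| by
    change _ = (t.2.2 + s * (t.2.1 + s * t.1) : ℕ)
    ring
  intro t t' h
  simp only [he] at h
  exact e.injective (Fin.ext (hlam _ (e t).2 _ (e t').2 h))

variable [Field F]

theorem Aent_finFunctionFinEquiv (lam : ℕ → F) (a : Fin N) (b : Fin s) (i j : Fin N → Fin s)
    (z : ℕ) :
    Aent lam s s a b (finFunctionFinEquiv i : Fin (s ^ N)) (finFunctionFinEquiv j : Fin (s ^ N)) z =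
      LinearMap.toMatrix'
        (digitOp a (checkKernel F b * diagonal (nodePoints lam s a b) ^ z)) i j := by
  rw [toMatrix'_digitOp_apply]
  simp only [Aent, digit_finFunctionFinEquiv, forall_digit_finFunctionFinEquiv_eq_iff, Fin.val_inj,
    finFunctionFinEquiv.injective.eq_iff, diagonal_pow, mul_diagonal, checkKernel, of_apply,
    Pi.pow_apply, nodePoints, ne_eq]
  by_cases hoff : ∀ u ≠ a, i u = j u
  · have hij : i = j ↔ i a = j a := ⟨fun h => h ▸ rfl, fun h => funext fun u => by
      by_cases hu : u = a
      · rw [hu, h]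
      · exact hoff u hu⟩
    simp only [hij]
    split_ifs <;> simp_all
  · have hij : i ≠ j := fun h => hoff fun u _ => congrFun h u
    simp [hoff, hij]

theorem sum_Aent_mul (lam : ℕ → F) (a : Fin N) (b : Fin s) (i : Fin N → Fin s) (z : ℕ)
    (D : ℕ → F) :
    ∑ j ∈ Finset.range (s ^ N), Aent lam s s a b (finFunctionFinEquiv i : Fin (s ^ N)) j z * D j =
      digitOp a (checkKernel F b * diagonal (nodePoints lam s a b) ^ z)
        (fun j => D (finFunctionFinEquiv j : Fin (s ^ N))) i := by
  rw [← LinearMap.toMatrix'_mulVec, Finset.sum_range, ← finFunctionFinEquiv.sum_comp]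
  simp only [Aent_finFunctionFinEquiv, mulVec, dotProduct]

theorem exists_equiv_enum (B : Finset (Fin s)) :
    ∃ e : Fin B.card ≃ B, ∀ q, ((e q : Fin s) : ℕ) = enum (B.map Fin.valEmbedding) q := by
  refine ⟨(B.orderIsoOfFin rfl).toEquiv, fun q => ?_⟩
  have hsort : (B.map Fin.valEmbedding).sort (· ≤ ·) = (B.sort (· ≤ ·)).map Fin.val :=
    (Fin.val_strictMono.strictMonoOn _).map_finsetSort.symm
  simp [enum, hsort, Finset.orderEmbOfFin_apply]

theorem AmatB_finProdFinEquiv (lam : ℕ → F) (g ℓ a t : ℕ) (B : Finset ℕ) (i j : Fin ℓ) (z : Fin t)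
    (q : Fin B.card) :
    AmatB lam s g ℓ a t B (finProdFinEquiv (i, z))
        (finCongr (mul_comm _ _) (finProdFinEquiv (q, j))) =
      Aent lam s g a (enum B q) i j z := by
  simp only [AmatB, of_apply, finProdFinEquiv_apply_val, finCongr_apply_coe,
    Nat.add_mul_div_left _ _ z.pos, Nat.add_mul_mod_self_left, Nat.add_mul_div_left _ _ i.pos,
    Nat.div_eq_of_lt, Nat.mod_eq_of_lt, Fin.is_lt, zero_add]

theorem LocalConstraints.exists_isUnit_checkBlock {lam : ℕ → F}
    (hloc : LocalConstraints lam s s (s ^ N) N) (a : Fin N) (B : Finset (Fin s)) :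
    ∃ e : Fin B.card ≃ B, IsUnit (checkBlock (nodePoints lam s a) a fun q => ↑(e q)) := by
  obtain ⟨e, he⟩ := exists_equiv_enum B
  refine ⟨e, ?_⟩
  obtain rfl | hne := B.eq_empty_or_nonempty
  · have : IsEmpty (Fin (∅ : Finset (Fin s)).card) := inferInstanceAs (IsEmpty (Fin 0))
    exact isUnit_of_subsingleton _
  set B' := B.map Fin.valEmbedding
  have hcard : B.card = B'.card := (Finset.card_map _).symm
  have hB' : B' ⊆ Finset.range s := fun x hx => by
    obtain ⟨y, -, rfl⟩ := Finset.mem_map.1 hx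
    exact Finset.mem_range.2 y.2
  have hA : IsUnit (AmatB lam s s (s ^ N) a B'.card B') :=
    (isUnit_iff_isUnit_det _).2 (hloc a a.2 B' hB' (hne.map)).isUnit
  let rows : Fin B.card × (Fin N → Fin s) ≃ Fin (s ^ N * B'.card) :=
    (Equiv.prodComm ..).trans ((finFunctionFinEquiv.prodCongr (finCongr hcard)).trans
      finProdFinEquiv)
  let cols : Fin B.card × (Fin N → Fin s) ≃ Fin (s ^ N * B'.card) :=
    ((finCongr hcard).prodCongr finFunctionFinEquiv).trans (finProdFinEquiv.trans
      (finCongr (mul_comm _ _)))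
  rw [← isUnit_submatrix_equiv rows cols] at hA
  convert (hA.map (compRingEquiv ..).symm).map LinearMap.toMatrixAlgEquiv'.symm.mapMatrix using 1
  ext z q : 1
  refine LinearMap.toMatrixAlgEquiv'.injective (ext fun i j => ?_)
  change _ = LinearMap.toMatrixAlgEquiv' (LinearMap.toMatrixAlgEquiv'.symm
    (of fun i j => AmatB lam s s (s ^ N) a B'.card B' (rows (z, i)) (cols (q, j)))) i j
  rw [AlgEquiv.apply_symm_apply, of_apply]
  change _ = AmatB lam s s (s ^ N) a B'.card B'
    (finProdFinEquiv (finFunctionFinEquiv i, finCongr hcard z))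
    (finCongr (mul_comm _ _) (finProdFinEquiv (finCongr hcard q, finFunctionFinEquiv j)))
  rw [AmatB_finProdFinEquiv, finCongr_apply_coe, finCongr_apply_coe, ← he,
    Aent_finFunctionFinEquiv]
  rfl

theorem card_filter_mul_add_mem {H : Finset ℕ} (hH : H ⊆ Finset.range (N * s)) :
    Finset.card {t : Fin N × Fin s | (t.1 * s + t.2 : ℕ) ∈ H} = H.card := by
  rw [Finset.card_filter, Fintype.sum_prod_type,
    ← sum_range_mul_eq_sum_sum N s fun m => if m ∈ H then 1 else 0, ← Finset.card_filter,
    Finset.filter_mem_eq_inter, Finset.inter_eq_right.2 hH]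

theorem InCode.sub {lam : ℕ → F} {s g ℓ r n : ℕ} {C C' : ℕ → ℕ → F}
    (hC : InCode lam s g ℓ r n C) (hC' : InCode lam s g ℓ r n C') :
    InCode lam s g ℓ r n (C - C') := fun ρ hρ => by
  simp only [Pi.sub_apply, mul_sub, Finset.sum_sub_distrib, hC ρ hρ, hC' ρ hρ, sub_zero]

theorem InCode.sum_digitOp_eq_zero {lam : ℕ → F} {r : ℕ} {C : ℕ → ℕ → F}
    (hC : InCode lam s s (s ^ N) r (N * s) C) {z : ℕ} (hz : z < r) :
    ∑ a : Fin N, ∑ b : Fin s, digitOp a (checkKernel F b * diagonal (nodePoints lam s a b) ^ z)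
      (fun j => C (a * s + b) (finFunctionFinEquiv j)) = 0 := by
  funext i
  have hρ : z + r * (finFunctionFinEquiv i : Fin (s ^ N)) < s ^ N * r := by
    have := Nat.mul_le_mul_left r (finFunctionFinEquiv i).is_lt
    rw [Nat.mul_succ] at this
    linarith
  have h := hC _ hρ
  rw [sum_range_mul_eq_sum_sum, Nat.add_mul_div_left _ _ (by omega), Nat.div_eq_of_lt hz,
    Nat.add_mul_mod_self_left, Nat.mod_eq_of_lt hz, zero_add] at h
  have hdiv : ∀ (a : Fin N) (b : Fin s), (a * s + b : ℕ) / s = a := fun a b => by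
    rw [mul_comm, Nat.mul_add_div b.pos, Nat.div_eq_of_lt b.2, add_zero]
  have hmod : ∀ (a : Fin N) (b : Fin s), (a * s + b : ℕ) % s = b := fun a b => by
    rw [Nat.mul_add_mod', Nat.mod_eq_of_lt b.2]
  simpa only [hdiv, hmod, sum_Aent_mul, Finset.sum_apply, Pi.zero_apply] using h

end Encoding

theorem statement13_general {F : Type*} [Field F] {n s r : ℕ} (hdiv : s ∣ n) {lam : ℕ → F}
    (hdist : ∀ i < n * s, ∀ j < n * s, lam i = lam j → i = j)
    (hloc : LocalConstraints lam s s (s ^ (n / s)) (n / s)) {a b : ℕ} (ha : a < n / s) (hb : b < s)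
    {H : Finset ℕ} (hHsub : H ⊆ Finset.range n) (hHnotin : a * s + b ∉ H)
    (hH : n + s ≤ H.card + r + 1) {C C' : ℕ → ℕ → F}
    (hC : InCode lam s s (s ^ (n / s)) r n C) (hC' : InCode lam s s (s ^ (n / s)) r n C')
    (hagree : ∀ j ∈ H, ∀ i < s ^ (n / s), digit s i a = b → C j i = C' j i) :
    ∀ i < s ^ (n / s), C (a * s + b) i = C' (a * s + b) i := by
  obtain ⟨N, rfl⟩ := hdiv
  rw [Nat.mul_div_cancel_left N (by omega)] at *
  rw [mul_comm s N] at *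
  lift a to Fin N using ha
  lift b to Fin s using hb
  have hD : (fun j => (C - C') (a * s + b) (finFunctionFinEquiv j : Fin (s ^ N))) = 0 :=
    eq_zero_of_parity_eq_zero_of_helpers (nodePoints_injective hdist)
      (fun a B => hloc.exists_isUnit_checkBlock a B)
      (H := {t : Fin N × Fin s | (t.1 * s + t.2 : ℕ) ∈ H}) (b := b)
      (D := fun a b j => (C - C') (a * s + b) (finFunctionFinEquiv j : Fin (s ^ N)))
      (by simpa using hHnotin)
      (by simpa [card_filter_mul_add_mem hHsub] using hH)
      (fun z hz => (hC.sub hC').sum_digitOp_eq_zero hz)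
      (fun t ht j hj => sub_eq_zero.2 <| hagree _ (by simpa using ht) _ (Fin.is_lt _) <| by
        rw [digit_finFunctionFinEquiv, hj])
  intro i hi
  have h := congrFun hD (finFunctionFinEquiv.symm ⟨i, hi⟩)
  rw [Equiv.apply_symm_apply] at h
  exact sub_eq_zero.1 h

/-- optimal-access repair for the first construction: if two codewords
agree, for every helper node `j ∈ H` (`|H| = d`, `as+b ∉ H`), on all symbols `C_j(i)` with
`i_a = b`, then they agree on the whole node `as+b`; i.e. node `as+b` is determined by the
`ℓ/s` accessed symbols of any `d` helpers. -/
theorem statement13 (F : Type*) [Field F] [Fintype F] (n k d s ℓ r : ℕ)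
    (hk : 1 ≤ k) (hkn : k < n) (hd₁ : k + 1 ≤ d) (hd₂ : d ≤ n - 1)
    (hs : s = d - k + 1) (hdiv : s ∣ n) (hℓ : ℓ = s ^ (n / s)) (hr : r = n - k)
    (lam : ℕ → F)
    (hdist : ∀ i < n * s, ∀ j < n * s, lam i = lam j → i = j)
    (hloc : LocalConstraints lam s s ℓ (n / s))
    (a b : ℕ) (ha : a < n / s) (hb : b < s)
    (H : Finset ℕ) (hHsub : H ⊆ Finset.range n) (hHnotin : a * s + b ∉ H)
    (hHcard : H.card = d)
    (C C' : ℕ → ℕ → F)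
    (hC : InCode lam s s ℓ r n C) (hC' : InCode lam s s ℓ r n C')
    (hagree : ∀ j ∈ H, ∀ i < ℓ, digit s i a = b → C j i = C' j i) :
    ∀ i < ℓ, C (a * s + b) i = C' (a * s + b) i := by
  subst hℓ
  exact statement13_general hdiv hdist hloc ha hb hHsub hHnotin (by omega) hC hC' hagree
end

section
/- For every subset S ⊆ F_q with |S| ≥ s^2 + Σ_{t=1}^{s} C(s,t)·s·t·(t−1)/2, there exist s^2 pairwise distinct elements λ_0, …, λ_{s^2−1} ∈ S such that det(A_{0,B}) ≠ 0 for every nonempty subset B ⊆ {0,…,s−1} (the local constraints for group 0). -/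
open Matrix

/-!
Regard the scalars `λ_i` as indeterminates. In the determinant of `A_{0,B}` every column carries its
own indeterminate, so each indeterminate has degree less than `|B|`, and the coefficient of
`∏ λ_{b_m s + j} ^ m` is obtained by keeping, in the column of `λ_{b_m s + j}`, only the entries of
exponent `m`: this leaves a block diagonal matrix whose blocks, the coefficient matrices of the
kernels, have determinant `1`. Hence these determinants are nonzero polynomials, and so is their
product with the Vandermonde determinant, which enforces distinctness. By the combinatorial
Nullstellensatz the product does not vanish identically on a grid `S × ⋯ × S` as soon as `|S|`
exceeds its degree in each indeterminate. Since `λ_{bs + j}` only occurs in the determinants with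
`b ∈ B`, that degree is at most `(gs - 1) + ∑_{B ∋ b} (|B| - 1) = (gs - 1) + (g - 1) 2 ^ (g - 2)`
for groups of size `g`.
-/

section PolynomialMethod

open MvPolynomial

theorem exists_eval_ne_zero_of_degreeOf_lt_card {σ R : Type*} [CommRing R] [IsDomain R]
    {p : MvPolynomial σ R} (hp : p ≠ 0) (S : σ → Finset R)
    (hS : ∀ i, p.degreeOf i < (S i).card) :
    ∃ x : σ → R, (∀ i, x i ∈ S i) ∧ eval x p ≠ 0 := by
  classical
  obtain ⟨t, q, rfl⟩ := exists_finset_rename p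
  have hq : q ≠ 0 := by rintro rfl; exact hp (map_zero _)
  obtain ⟨y, hyS, hy⟩ : ∃ y : t → R, (∀ i : t, y i ∈ S i) ∧ eval y q ≠ 0 := by
    by_contra! h
    refine hq (eq_zero_of_eval_zero_at_prod_finset q (fun i => S i) (fun i => ?_) h)
    rw [← degreeOf_rename_of_injective Subtype.val_injective]
    exact hS i
  choose z hz using fun i => Finset.card_pos.1 (Nat.zero_lt_of_lt (hS i))
  refine ⟨fun i => if hi : i ∈ t then y ⟨i, hi⟩ else z i, fun i => ?_, ?_⟩
  · by_cases hi : i ∈ t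
    · simpa only [hi, dite_true] using hyS ⟨i, hi⟩
    · simpa only [hi, dite_false] using hz i
  · rw [eval_rename]
    convert hy using 3
    ext i
    simp

theorem degreeOf_rename_eq_zero {σ τ R : Type*} [CommSemiring R] {f : σ → τ} {t : τ}
    (ht : t ∉ Set.range f) (p : MvPolynomial σ R) : (rename f p).degreeOf t = 0 := by
  classical
  refine Nat.le_zero.1 (degreeOf_le_iff.2 fun m hm => ?_)
  refine (mem_support_notMem_vars_zero hm fun hvars => ht ?_).le
  obtain ⟨i, -, hi⟩ := Finset.mem_image.1 (vars_rename f p hvars)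
  exact ⟨i, hi⟩

theorem degreeOf_rename_le {σ τ R : Type*} [CommSemiring R] {f : σ → τ} (hf : Function.Injective f)
    {p : MvPolynomial σ R} {d : ℕ} (hp : ∀ i, p.degreeOf i ≤ d) (t : τ) :
    (rename f p).degreeOf t ≤ d := by
  by_cases ht : t ∈ Set.range f
  · obtain ⟨i, rfl⟩ := ht
    exact (degreeOf_rename_of_injective hf i).trans_le (hp i)
  · exact (degreeOf_rename_eq_zero ht p).trans_le d.zero_le

end PolynomialMethod

section ColumnPowerMatrix

open MvPolynomial

variable {n R : Type*} [CommRing R]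

/-- The matrix with entries `A i j * X j ^ h i`: every column has its own indeterminate, whose
exponent is dictated by the row. It models both the Vandermonde matrix and `A_{0,B}`. -/
noncomputable def columnPowerMatrix (A : Matrix n n R) (h : n → ℕ) :
    Matrix n n (MvPolynomial n R) :=
  Matrix.of fun i j => C (A i j) * X j ^ h i

variable [Fintype n] [DecidableEq n]

theorem det_columnPowerMatrix (A : Matrix n n R) (h : n → ℕ) :
    (columnPowerMatrix A h).det = ∑ σ : Equiv.Perm n,
      monomial (Finsupp.equivFunOnFinite.symm (h ∘ σ))
        (Equiv.Perm.sign σ • ∏ j, A (σ j) j) := by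
  refine (Matrix.det_apply _).trans (Finset.sum_congr rfl fun σ _ => ?_)
  rw [Units.smul_def, Units.smul_def, map_zsmul, monomial_eq, Finsupp.prod_fintype _ _ (by simp)]
  simp [columnPowerMatrix, Finset.prod_mul_distrib]

theorem coeff_det_columnPowerMatrix (A : Matrix n n R) (h g : n → ℕ) :
    (columnPowerMatrix A h).det.coeff (Finsupp.equivFunOnFinite.symm g) =
      (Matrix.of fun i j => if h i = g j then A i j else 0).det := by
  rw [det_columnPowerMatrix, coeff_sum, Matrix.det_apply]
  refine Finset.sum_congr rfl fun σ _ => ?_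
  simp only [coeff_monomial, Equiv.apply_eq_iff_eq, funext_iff, Function.comp_apply,
    Matrix.of_apply, Finset.prod_ite_zero, Finset.mem_univ, true_imp_iff, smul_ite, smul_zero]

theorem degreeOf_det_columnPowerMatrix_le (A : Matrix n n R) {h : n → ℕ} {d : ℕ}
    (hd : ∀ i, h i ≤ d) (j : n) : (columnPowerMatrix A h).det.degreeOf j ≤ d := by
  rw [det_columnPowerMatrix]
  refine (degreeOf_sum_le j _ _).trans (Finset.sup_le fun σ _ => ?_)
  refine degreeOf_le_iff.2 fun m hm => ?_
  obtain rfl := Finset.mem_singleton.1 (support_monomial_subset hm)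
  exact hd (σ j)

theorem eval_det_columnPowerMatrix (A : Matrix n n R) (h : n → ℕ) (x : n → R) :
    eval x (columnPowerMatrix A h).det = (Matrix.of fun i j => A i j * x j ^ h i).det := by
  rw [RingHom.map_det]
  congr 1
  ext i j
  simp [columnPowerMatrix]

end ColumnPowerMatrix

section Distinctness

open MvPolynomial

/-- The Vandermonde determinant `∏_{i < j < N} (X j - X i)`, whose non-vanishing at `x` says that
`x 0, …, x (N - 1)` are distinct. -/
noncomputable def vandermondePoly (R : Type*) [CommRing R] (N : ℕ) : MvPolynomial ℕ R :=
  rename Fin.val (columnPowerMatrix (Matrix.of fun _ _ : Fin N => (1 : R)) Fin.val).det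

variable {R : Type*} [CommRing R]

theorem vandermondePoly_ne_zero [Nontrivial R] (N : ℕ) : vandermondePoly R N ≠ 0 := by
  refine (rename_injective _ Fin.val_injective).ne_iff' (map_zero _) |>.2 fun h => ?_
  have hcoeff := coeff_det_columnPowerMatrix (Matrix.of fun _ _ : Fin N => (1 : R)) Fin.val Fin.val
  have hone : (Matrix.of fun i j : Fin N => if (i : ℕ) = j then (1 : R) else 0) = 1 := by
    ext i j
    simp [Matrix.one_apply, Fin.ext_iff]
  simp [h, hone] at hcoeff

theorem degreeOf_vandermondePoly_le (N t : ℕ) : (vandermondePoly R N).degreeOf t ≤ N - 1 :=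
  degreeOf_rename_le Fin.val_injective
    (degreeOf_det_columnPowerMatrix_le _ fun i => Nat.le_sub_one_of_lt i.2) t

theorem eval_vandermondePoly_ne_zero_iff [IsDomain R] {N : ℕ} {x : ℕ → R} :
    eval x (vandermondePoly R N) ≠ 0 ↔ Set.InjOn x (Set.Iio N) := by
  have hdet : eval x (vandermondePoly R N) =
      (Matrix.vandermonde fun i : Fin N => x i).det := by
    rw [vandermondePoly, eval_rename, eval_det_columnPowerMatrix, ← Matrix.det_transpose]
    congr 1
    ext i j
    simp
  rw [hdet, Matrix.det_vandermonde_ne_zero_iff]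
  exact ⟨fun h i hi j hj hij => congrArg Fin.val (@h ⟨i, hi⟩ ⟨j, hj⟩ hij),
    fun h i j hij => Fin.ext (h i.2 j.2 hij)⟩

end Distinctness

section Digits

theorem digit_injective {s : ℕ} (hs : 2 ≤ s) : Function.Injective (digit s) := by
  intro a b hab
  have hmod : ∀ N, a % s ^ N = b % s ^ N := by
    intro N
    induction N with
    | zero => simp [Nat.mod_one]
    | succ N ih =>
      rw [Nat.mod_pow_succ, Nat.mod_pow_succ, ih]
      exact congrArg (_ + s ^ N * ·) (congrFun hab N)
  have hlt : ∀ c ≤ max a b, c < s ^ max a b := fun c hc => hc.trans_lt (Nat.lt_pow_self hs)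
  rw [← Nat.mod_eq_of_lt (hlt a (le_max_left a b)), hmod,
    Nat.mod_eq_of_lt (hlt b (le_max_right a b))]

theorem digit_add_mul_zero {s i : ℕ} (hi : i < s) (q : ℕ) : digit s (i + s * q) 0 = i := by
  simp [digit, Nat.mod_eq_of_lt hi]

theorem digit_add_mul_succ {s i : ℕ} (hi : i < s) (q u : ℕ) :
    digit s (i + s * q) (u + 1) = digit s q u := by
  rw [digit, pow_succ', ← Nat.div_div_eq_div_mul, Nat.add_mul_div_left _ _ (by lia),
    Nat.div_eq_of_lt hi, zero_add, digit]

theorem forall_digit_add_mul_eq_iff {s i j : ℕ} (hs : 2 ≤ s) (hi : i < s) (hj : j < s)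
    (p q : ℕ) :
    (∀ u ≠ 0, digit s (i + s * p) u = digit s (j + s * q) u) ↔ p = q := by
  rw [← (digit_injective hs).eq_iff, funext_iff]
  refine ⟨fun h u => ?_, fun h u hu => ?_⟩
  · simpa only [digit_add_mul_succ hi, digit_add_mul_succ hj] using h (u + 1) u.succ_ne_zero
  · obtain ⟨u, rfl⟩ := Nat.exists_eq_succ_of_ne_zero hu
    simpa only [digit_add_mul_succ hi, digit_add_mul_succ hj] using h u

end Digits

section Kernel

/-- The coefficients of the kernel matrix `K_{0,b}`: its `(i, j)` block is
`kernelCoeff s b i j • L_{bs + j}`. For `b ≥ s` this is the identity matrix. -/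
def kernelCoeff (R : Type*) [CommRing R] (s b : ℕ) : Matrix (Fin s) (Fin s) R :=
  Matrix.of fun i j => if i = j then 1 else if (i : ℕ) = b then -1 else 0

theorem det_kernelCoeff (R : Type*) [CommRing R] (s b : ℕ) : (kernelCoeff R s b).det = 1 := by
  let u : Fin s → R := fun i => if (i : ℕ) = b then 1 else 0
  let v : Fin s → R := fun j => if (j : ℕ) = b then 0 else -1
  have hrank_one : kernelCoeff R s b =
      1 + Matrix.replicateCol Unit u * Matrix.replicateRow Unit v := by
    ext i j
    simp only [kernelCoeff, Matrix.of_apply, Matrix.add_apply, Matrix.one_apply,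
      Matrix.mul_apply, Matrix.replicateCol_apply, Matrix.replicateRow_apply,
      Finset.univ_unique, Finset.sum_singleton, u, v]
    grind
  have horth : v ⬝ᵥ u = 0 := Finset.sum_eq_zero fun i _ => by
    by_cases h : (i : ℕ) = b <;> simp [u, v, h]
  rw [hrank_one, Matrix.det_one_add_replicateCol_mul_replicateRow, horth, add_zero]

theorem Aent_add_mul {F : Type*} [Field F] (lam : ℕ → F) {s : ℕ} (hs : 2 ≤ s) (g b : ℕ)
    (i j : Fin s) (p q z : ℕ) :
    Aent lam s g 0 b (i + s * p) (j + s * q) z =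
      if p = q then kernelCoeff F s b i j * lam (b * s + j) ^ z else 0 := by
  have hij : (i : ℕ) + s * p = j + s * q ↔ i = j ∧ p = q := by
    refine ⟨fun h => ?_, by rintro ⟨rfl, rfl⟩; rfl⟩
    have hi : (i : ℕ) = j := by
      simpa only [digit_add_mul_zero i.2, digit_add_mul_zero j.2] using congrArg (digit s · 0) h
    exact ⟨Fin.ext hi, Nat.eq_of_mul_eq_mul_left (by lia : 0 < s) (by lia)⟩
  rw [Aent, digit_add_mul_zero i.2, digit_add_mul_zero j.2]
  simp only [forall_digit_add_mul_eq_iff hs i.2 j.2, hij, zero_mul, zero_add, kernelCoeff,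
    Matrix.of_apply]
  grind

end Kernel

section LocalDeterminant

open MvPolynomial

variable {F : Type*} [Field F]

theorem enum_eq_orderEmbOfFin (B : Finset ℕ) (m : Fin B.card) :
    enum B m = B.orderEmbOfFin rfl m := by
  rw [enum, Finset.orderEmbOfFin_apply, List.getD_eq_getElem]
  rfl

theorem enum_mem (B : Finset ℕ) (m : Fin B.card) : enum B m ∈ B :=
  enum_eq_orderEmbOfFin B m ▸ B.orderEmbOfFin_mem rfl m

theorem enum_val_injective (B : Finset ℕ) : Function.Injective fun m : Fin B.card => enum B m := by
  simpa only [enum_eq_orderEmbOfFin] using (B.orderEmbOfFin rfl).injective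

/-- The index `b_m s + j` of the scalar `λ` occurring in column `j` of the `m`-th kernel matrix
`K_{0,b_m}`. -/
def columnIndex (s : ℕ) (B : Finset ℕ) (c : Fin s × Fin B.card) : ℕ :=
  enum B c.2 * s + c.1

theorem columnIndex_div (s : ℕ) (B : Finset ℕ) (c : Fin s × Fin B.card) :
    columnIndex s B c / s = enum B c.2 := by
  rw [columnIndex, mul_comm, Nat.mul_add_div (Fin.pos c.1), Nat.div_eq_of_lt c.1.2, add_zero]

theorem columnIndex_injective (s : ℕ) (B : Finset ℕ) : Function.Injective (columnIndex s B) := by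
  intro c c' h
  have hm : c.2 = c'.2 := enum_val_injective B <| by
    simpa only [columnIndex_div] using congrArg (· / s) h
  have hj : (c.1 : ℕ) = c'.1 := by
    simpa only [columnIndex, hm, add_right_inj] using h
  exact Prod.ext (Fin.ext hj) hm

/-- The coefficients of `[K_{0,b_1} | ⋯ | K_{0,b_v}]`, whose entry in row `z` of the block row `i`
and in column `j` of `K_{0,b_m}` is this coefficient at `((i, z), (j, m))` times
`λ_{b_m s + j} ^ z`. -/
def localCoeff (R : Type*) [CommRing R] (s : ℕ) (B : Finset ℕ) :
    Matrix (Fin s × Fin B.card) (Fin s × Fin B.card) R :=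
  Matrix.of fun r c => kernelCoeff R s (enum B c.2) r.1 c.1

/-- The determinant of `[K_{0,b_1} | ⋯ | K_{0,b_v}]`, as a polynomial in the scalars `λ_i`. -/
noncomputable def localPoly (R : Type*) [CommRing R] (s : ℕ) (B : Finset ℕ) : MvPolynomial ℕ R :=
  rename (columnIndex s B) (columnPowerMatrix (localCoeff R s B) fun r => r.2).det

theorem localPoly_ne_zero (R : Type*) [CommRing R] [Nontrivial R] (s : ℕ) (B : Finset ℕ) :
    localPoly R s B ≠ 0 := by
  refine (rename_injective _ (columnIndex_injective s B)).ne_iff' (map_zero _) |>.2 fun h => ?_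
  have hcoeff := coeff_det_columnPowerMatrix (localCoeff R s B) (fun r => r.2) (fun c => c.2)
  have hblock : (Matrix.of fun r c : Fin s × Fin B.card =>
      if (r.2 : ℕ) = c.2 then localCoeff R s B r c else 0) =
      Matrix.blockDiagonal fun m : Fin B.card => kernelCoeff R s (enum B m) := by
    ext r c
    simp only [localCoeff, Matrix.of_apply, Matrix.blockDiagonal_apply, Fin.ext_iff]
    grind
  simp [h, hblock, det_kernelCoeff] at hcoeff

theorem degreeOf_localPoly_le (R : Type*) [CommRing R] (s : ℕ) (B : Finset ℕ) (t : ℕ) :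
    (localPoly R s B).degreeOf t ≤ if t / s ∈ B then B.card - 1 else 0 := by
  split_ifs with ht
  · exact degreeOf_rename_le (columnIndex_injective s B)
      (degreeOf_det_columnPowerMatrix_le _ fun r => Nat.le_sub_one_of_lt r.2.2) t
  · refine (degreeOf_rename_eq_zero ?_ _).le
    rintro ⟨c, rfl⟩
    exact ht (columnIndex_div s B c ▸ enum_mem B c.2)

theorem eval_localPoly {R : Type*} [CommRing R] (s : ℕ) (B : Finset ℕ) (lam : ℕ → R) :
    eval lam (localPoly R s B) = (Matrix.of fun r c =>
      localCoeff R s B r c * lam (columnIndex s B c) ^ (r.2 : ℕ)).det := by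
  rw [localPoly, eval_rename, eval_det_columnPowerMatrix]
  rfl

/-- The numbering of the columns of `AmatB`, as pairs of an inner column and a member of `B`. -/
def columnEquiv (ℓ v : ℕ) : Fin ℓ × Fin v ≃ Fin (ℓ * v) :=
  (Equiv.prodComm _ _).trans (finProdFinEquiv.trans (finCongr (mul_comm v ℓ)))

theorem AmatB_submatrix (lam : ℕ → F) (s g ℓ a t : ℕ) (B : Finset ℕ) :
    (AmatB lam s g ℓ a t B).submatrix finProdFinEquiv (columnEquiv ℓ B.card) =
      Matrix.of fun r c => Aent lam s g a (enum B c.2) r.1 c.1 r.2 := by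
  have hdivmod : ∀ {k l : ℕ} (x : Fin k) (y : Fin l),
      (y + l * x : ℕ) / l = x ∧ (y + l * x : ℕ) % l = y := fun x y =>
    ⟨by rw [Nat.add_mul_div_left _ _ y.pos, Nat.div_eq_of_lt y.2, zero_add],
      by rw [Nat.add_mul_mod_self_left, Nat.mod_eq_of_lt y.2]⟩
  ext r c
  simp [AmatB, columnEquiv, hdivmod]

/-- Splits a block index below `p * s` into its lowest base-`s` digit, on which the kernel matrices
act, and the remaining digits, which number the copies of the kernel in `I_p ⊗ K`. -/
def digitSplitEquiv (s p v : ℕ) : (Fin s × Fin v) × Fin p ≃ Fin (p * s) × Fin v :=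
  (Equiv.prodComm _ _).trans <|
    (Equiv.prodAssoc _ _ _).symm.trans (finProdFinEquiv.prodCongr (Equiv.refl _))

theorem Aent_submatrix_digitSplitEquiv (lam : ℕ → F) {s : ℕ} (hs : 2 ≤ s) (g p : ℕ)
    (B : Finset ℕ) :
    (Matrix.of fun r c : Fin (p * s) × Fin B.card =>
      Aent lam s g 0 (enum B c.2) r.1 c.1 r.2).submatrix
        (digitSplitEquiv s p B.card) (digitSplitEquiv s p B.card) =
      Matrix.blockDiagonal fun _ : Fin p => Matrix.of fun r c =>
        localCoeff F s B r c * lam (columnIndex s B c) ^ (r.2 : ℕ) := by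
  ext r c
  simp [digitSplitEquiv, Aent_add_mul lam hs, Matrix.blockDiagonal_apply, Fin.ext_iff, localCoeff,
    columnIndex]

theorem det_AmatB_ne_zero (lam : ℕ → F) {s ℓ : ℕ} (hs : 2 ≤ s) (hℓ : s ∣ ℓ) (g : ℕ)
    {B : Finset ℕ} (hB : eval lam (localPoly F s B) ≠ 0) :
    (AmatB lam s g ℓ 0 B.card B).det ≠ 0 := by
  obtain ⟨p, rfl⟩ := exists_eq_mul_left_of_dvd hℓ
  rw [← isUnit_iff_ne_zero, ← Matrix.isUnit_iff_isUnit_det,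
    ← Matrix.isUnit_submatrix_equiv finProdFinEquiv (columnEquiv (p * s) B.card), AmatB_submatrix,
    ← Matrix.isUnit_submatrix_equiv (digitSplitEquiv s p B.card) (digitSplitEquiv s p B.card),
    Aent_submatrix_digitSplitEquiv lam hs, Matrix.isUnit_iff_isUnit_det, Matrix.det_blockDiagonal,
    ← eval_localPoly, isUnit_iff_ne_zero]
  exact Finset.prod_ne_zero_iff.2 fun _ _ => hB

end LocalDeterminant

section Counting

theorem sum_powerset_filter_mem_card_sub_one {α : Type*} [DecidableEq α] {A : Finset α} {a : α}
    (ha : a ∈ A) :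
    ∑ B ∈ A.powerset with a ∈ B, (B.card - 1) = (A.card - 1) * 2 ^ (A.card - 2) := by
  have hnot : ∀ B ∈ (A.erase a).powerset, a ∉ B := fun B hB h =>
    Finset.notMem_erase a A (Finset.mem_powerset.1 hB h)
  calc ∑ B ∈ A.powerset with a ∈ B, (B.card - 1)
      = ∑ B ∈ (A.erase a).powerset, B.card := by
        rw [Finset.sum_filter, ← Finset.insert_erase ha,
          Finset.sum_powerset_insert (Finset.notMem_erase a A), Finset.insert_erase ha,
          Finset.sum_eq_zero fun B hB => if_neg (hnot B hB), zero_add]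
        refine Finset.sum_congr rfl fun B hB => ?_
        rw [if_pos (Finset.mem_insert_self a B), Finset.card_insert_of_notMem (hnot B hB),
          Nat.add_sub_cancel]
    _ = (A.card - 1) * 2 ^ (A.card - 2) := by
        rw [Finset.sum_powerset_apply_card fun m => m]
        simp only [smul_eq_mul, mul_comm (Nat.choose _ _), Nat.sum_range_mul_choose,
          Finset.card_erase_of_mem ha, Nat.sub_sub]

theorem sub_one_mul_two_pow_le_sum_choose (s : ℕ) :
    (s - 1) * 2 ^ (s - 2) ≤ ∑ t ∈ Finset.Icc 1 s, s.choose t * (s * t * (t - 1) / 2) := by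
  obtain _ | s := s
  · simp
  calc s * 2 ^ (s - 1)
      = ∑ t ∈ Finset.range (s + 1), s.choose t * t := by
        simp only [← Nat.sum_range_mul_choose, mul_comm]
    _ ≤ ∑ t ∈ Finset.range (s + 1),
          (s + 1).choose (t + 1) * ((s + 1) * (t + 1) * (t + 1 - 1) / 2) := by
        refine Finset.sum_le_sum fun t _ => Nat.mul_le_mul ?_ ?_
        · rw [Nat.choose_succ_succ]
          exact Nat.le_add_right _ _
        · rw [Nat.le_div_iff_mul_le two_pos, Nat.add_sub_cancel]
          nlinarith [Nat.le_mul_self t, Nat.zero_le (s * t * t), Nat.zero_le (s * t)]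
    _ = ∑ t ∈ Finset.Icc 1 (s + 1), (s + 1).choose t * ((s + 1) * t * (t - 1) / 2) := by
        rw [Finset.range_eq_Ico, Finset.sum_Ico_add' (fun t =>
          (s + 1).choose t * ((s + 1) * t * (t - 1) / 2))]
        rfl

end Counting

section Existence

open MvPolynomial

/-- The polynomial whose non-vanishing at `λ` guarantees that the scalars `λ_0, …, λ_{gs - 1}` are
distinct and satisfy all local constraints for a group of size `g`. -/
noncomputable def constraintPoly (R : Type*) [CommRing R] (g s : ℕ) : MvPolynomial ℕ R :=
  vandermondePoly R (g * s) * ∏ B ∈ (Finset.range g).powerset, localPoly R s B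

variable (R : Type*) [CommRing R]

theorem constraintPoly_ne_zero [IsDomain R] (g s : ℕ) : constraintPoly R g s ≠ 0 :=
  mul_ne_zero (vandermondePoly_ne_zero _) <|
    Finset.prod_ne_zero_iff.2 fun B _ => localPoly_ne_zero R s B

theorem degreeOf_constraintPoly_le (g s t : ℕ) :
    (constraintPoly R g s).degreeOf t ≤ (g * s - 1) + (g - 1) * 2 ^ (g - 2) := by
  refine (degreeOf_mul_le _ _ _).trans (add_le_add (degreeOf_vandermondePoly_le _ _) ?_)
  calc (∏ B ∈ (Finset.range g).powerset, localPoly R s B).degreeOf t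
      ≤ ∑ B ∈ (Finset.range g).powerset, (localPoly R s B).degreeOf t := degreeOf_prod_le _ _ _
    _ ≤ ∑ B ∈ (Finset.range g).powerset with t / s ∈ B, (B.card - 1) := by
        rw [Finset.sum_filter]
        exact Finset.sum_le_sum fun B _ => degreeOf_localPoly_le R s B t
    _ ≤ (g - 1) * 2 ^ (g - 2) := by
        by_cases ht : t / s ∈ Finset.range g
        · rw [sum_powerset_filter_mem_card_sub_one ht, Finset.card_range]
        · rw [Finset.filter_false_of_mem fun B hB h => ht (Finset.mem_powerset.1 hB h),
            Finset.sum_empty]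
          exact Nat.zero_le _

end Existence

/-- The group size is `g = s` in the first construction of the paper and `g = s + 1` in the
second. -/
theorem statement16_general {F : Type*} [Field F] {s g ℓ : ℕ} (hs : 2 ≤ s) (hg : 0 < g)
    (hℓ : s ∣ ℓ) (S : Finset F) (hS : g * s + (g - 1) * 2 ^ (g - 2) ≤ S.card) :
    ∃ lam : ℕ → F, (∀ i, lam i ∈ S) ∧ Set.InjOn lam (Set.Iio (g * s)) ∧
      ∀ B ⊆ Finset.range g, (AmatB lam s g ℓ 0 B.card B).det ≠ 0 := by
  have hgs : 0 < g * s := by positivity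
  obtain ⟨lam, hlamS, hlam⟩ := exists_eval_ne_zero_of_degreeOf_lt_card
    (constraintPoly_ne_zero F g s) (fun _ => S) fun t =>
      (degreeOf_constraintPoly_le F g s t).trans_lt (by lia)
  rw [constraintPoly, map_mul, map_prod, mul_ne_zero_iff, Finset.prod_ne_zero_iff] at hlam
  exact ⟨lam, hlamS, eval_vandermondePoly_ne_zero_iff.1 hlam.1, fun B hB =>
    det_AmatB_ne_zero lam hs hℓ g (hlam.2 B (Finset.mem_powerset.2 hB))⟩

/-- Appendix B of the paper: for every subset `S ⊆ F_q` with
`|S| ≥ s² + Σ_{t=1}^{s} C(s,t)·s·t·(t−1)/2`, there exist `s²` pairwise distinct elements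
`λ_0, …, λ_{s²−1} ∈ S` satisfying the local constraints for group `0`:
`det(A_{0,B}) ≠ 0` for every nonempty `B ⊆ [s]`. -/
theorem statement16 (F : Type*) [Field F] [Fintype F] (n k d s ℓ : ℕ)
    (hk : 1 ≤ k) (hkn : k < n) (hd₁ : k + 1 ≤ d) (hd₂ : d ≤ n - 1)
    (hs : s = d - k + 1) (hdiv : s ∣ n) (hℓ : ℓ = s ^ (n / s)) :
    ∀ S : Finset F,
      s ^ 2 + ∑ t ∈ Finset.Icc 1 s, s.choose t * (s * t * (t - 1) / 2) ≤ S.card →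
      ∃ lam : ℕ → F,
        (∀ i < s ^ 2, lam i ∈ S) ∧
        (∀ i < s ^ 2, ∀ j < s ^ 2, lam i = lam j → i = j) ∧
        (∀ B ⊆ Finset.range s, B.Nonempty → (AmatB lam s s ℓ 0 B.card B).det ≠ 0) := by
  intro S hS
  have hs₂ : 2 ≤ s := by lia
  have hsℓ : s ∣ ℓ := hℓ ▸ dvd_pow_self s (Nat.div_pos (Nat.le_of_dvd (by lia) hdiv) (by lia)).ne'
  have hcard : s * s + (s - 1) * 2 ^ (s - 2) ≤ S.card := by
    grw [← sq, sub_one_mul_two_pow_le_sum_choose, hS]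
  obtain ⟨lam, hlamS, hinj, hdet⟩ := statement16_general hs₂ (by lia) hsℓ S hcard
  rw [← sq] at hinj
  exact ⟨lam, fun i _ => hlamS i, fun i hi j hj h => hinj hi hj h, fun B hB _ => hdet B hB⟩
end
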